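/- Let d ≥ 1 and let f ∈ C^∞(ℝ^d) satisfy ‖∂^β f‖_{L²(ℝ^d)} ≤ C₁ C₂^{|β|} β! for all multi-indices β ∈ ℕ₀^d, with constants C₁, C₂ > 0. Let σ ∈ (0,1] be such that 2C₂σ < 1, and let B ⊂ ℝ^d be an open Euclidean ball of radius τ with 0 < τ < σ/d. Then there exists a constant C₀ > 0 such that for all multi-indices α ∈ ℕ₀^d with |α| = m, one has ‖∂^α f‖_{L^∞(B)} ≤ C₀ · (m+d)!/σ^m; consequently Σ_{α ∈ ℕ₀^d} (‖∂^α f‖_{L^∞(B)}/α!) · τ^{|α|} < ∞. -/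

import Mathlib

open MeasureTheory
open scoped ENNReal

/-- The partial derivative in the `i`-th coordinate direction. -/
noncomputable def pderivE {d : ℕ} (i : Fin d) (f : EuclideanSpace ℝ (Fin d) → ℝ) :
    EuclideanSpace ℝ (Fin d) → ℝ :=
  fun x => fderiv ℝ f x (EuclideanSpace.single i 1)

/-- The multi-index partial derivative `∂^β f` for `β ∈ ℕ₀^d`. -/
noncomputable def mderiv {d : ℕ} (β : Fin d → ℕ) (f : EuclideanSpace ℝ (Fin d) → ℝ) :
    EuclideanSpace ℝ (Fin d) → ℝ :=
  (List.finRange d).foldr (fun i g => (pderivE i)^[β i] g) f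

theorem aux1d (h h' : ℝ → ℝ) (hd : ∀ s, HasDerivAt h (h' s) s) (hc : Continuous h') (t : ℝ) :
    ‖h t‖ₑ ^ 2 ≤ 2 * ∫⁻ s, (‖h s‖ₑ ^ 2 + ‖h' s‖ₑ ^ 2) := by
  have hcont : Continuous h := continuous_iff_continuousAt.2 fun s => (hd s).continuousAt
  have ftc : ∫ s in t..(t+1), (-(h s)^2 + (t+1-s) * (2 * h s * h' s)) = - (h t)^2 := by
    have := intervalIntegral.integral_eq_sub_of_hasDerivAt (a := t) (b := t+1)
      (f := fun s => (t+1-s) * (h s)^2) (f' := fun s => (-(h s)^2 + (t+1-s) * (2 * h s * h' s)))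
      (fun s _ => by
        have h1 : HasDerivAt (fun s : ℝ => t+1-s) (-1) s := by
          simpa using (hasDerivAt_id s).const_sub (t+1)
        have := h1.mul ((hd s).pow 2)
        refine this.congr_deriv ?_
        simp)
      (Continuous.intervalIntegrable (by fun_prop) _ _)
    rw [this]; simp
  have key : (h t)^2 ≤ ∫ s in t..(t+1), 2 * ((h s)^2 + (h' s)^2) := by
    have : (h t)^2 = ∫ s in t..(t+1), -(-(h s)^2 + (t+1-s) * (2 * h s * h' s)) := by
      rw [intervalIntegral.integral_neg, ftc]; ring
    rw [this]
    apply intervalIntegral.integral_mono_on (by linarith)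
    · exact Continuous.intervalIntegrable (by fun_prop) _ _
    · exact Continuous.intervalIntegrable (by fun_prop) _ _
    · intro s hs
      have h0 : 0 ≤ t+1-s := by linarith [hs.2]
      have h1 : t+1-s ≤ 1 := by linarith [hs.1]
      have h2 : -(2 * h s * h' s) ≤ (h s)^2 + (h' s)^2 := by nlinarith [sq_nonneg (h s + h' s)]
      have h3 : (t+1-s) * (-(2 * h s * h' s)) ≤ (t+1-s) * ((h s)^2 + (h' s)^2) :=
        mul_le_mul_of_nonneg_left h2 h0
      nlinarith [mul_le_mul_of_nonneg_right h1 (by positivity : 0 ≤ (h s)^2 + (h' s)^2), sq_nonneg (h' s)]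
  have e2 : ∀ r : ℝ, ‖r‖ₑ ^ 2 = ENNReal.ofReal (r^2) := fun r => by
    rw [← ofReal_norm, ← ENNReal.ofReal_pow (norm_nonneg _)]; simp
  rw [e2, ← lintegral_const_mul' _ _ (by simp)]
  refine (ENNReal.ofReal_le_ofReal key).trans ?_
  rw [intervalIntegral.integral_of_le (by linarith), ofReal_integral_eq_lintegral_ofReal]
  · refine (setLIntegral_le_lintegral _ _).trans (le_of_eq ?_)
    congr 1; ext s
    rw [e2, e2, ENNReal.ofReal_mul (by norm_num), ENNReal.ofReal_add (by positivity) (by positivity)]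
    simp
  · exact (intervalIntegrable_iff_integrableOn_Ioc_of_le (by linarith)).1
      (Continuous.intervalIntegrable (by fun_prop) _ _)
  · exact ae_of_all _ fun s => by positivity

theorem pderivE_contDiff {d : ℕ} (i : Fin d) {g : EuclideanSpace ℝ (Fin d) → ℝ}
    (hg : ContDiff ℝ (⊤ : ℕ∞) g) : ContDiff ℝ (⊤ : ℕ∞) (pderivE i g) := by
  unfold pderivE
  exact (hg.fderiv_right (m := (⊤ : ℕ∞)) (by simp)).clm_apply contDiff_const

theorem iter_contDiff {d : ℕ} (i : Fin d) (n : ℕ) {g : EuclideanSpace ℝ (Fin d) → ℝ}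
    (hg : ContDiff ℝ (⊤ : ℕ∞) g) : ContDiff ℝ (⊤ : ℕ∞) ((pderivE i)^[n] g) := by
  induction n with
  | zero => exact hg
  | succ n ih => rw [Function.iterate_succ_apply']; exact pderivE_contDiff i ih

theorem foldr_contDiff {d : ℕ} (β : Fin d → ℕ) {g : EuclideanSpace ℝ (Fin d) → ℝ}
    (hg : ContDiff ℝ (⊤ : ℕ∞) g) (l : List (Fin d)) :
    ContDiff ℝ (⊤ : ℕ∞) (l.foldr (fun i g => (pderivE i)^[β i] g) g) := by
  induction l with
  | nil => exact hg
  | cons j l ih => exact iter_contDiff j _ ih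

theorem pderivE_comm {d : ℕ} (i j : Fin d) {g : EuclideanSpace ℝ (Fin d) → ℝ}
    (hg : ContDiff ℝ (⊤ : ℕ∞) g) : pderivE i (pderivE j g) = pderivE j (pderivE i g) := by
  ext x
  have hdiff : DifferentiableAt ℝ (fderiv ℝ g) x :=
    ((hg.fderiv_right (m := (⊤ : ℕ∞)) (by simp)).differentiable (by simp)) x
  have hs : IsSymmSndFDerivAt ℝ g x := by
    apply hg.contDiffAt.isSymmSndFDerivAt
    simp only [minSmoothness_of_isRCLikeNormedField]
    exact WithTop.coe_le_coe.2 (le_top (a := (2 : ℕ∞)))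
  unfold pderivE
  rw [fderiv_clm_apply hdiff (differentiableAt_const _), fderiv_clm_apply hdiff (differentiableAt_const _)]
  simpa using hs _ _

theorem pderivE_iter_comm {d : ℕ} (i j : Fin d) (n : ℕ) {g : EuclideanSpace ℝ (Fin d) → ℝ}
    (hg : ContDiff ℝ (⊤ : ℕ∞) g) :
    pderivE i ((pderivE j)^[n] g) = (pderivE j)^[n] (pderivE i g) := by
  induction n with
  | zero => rfl
  | succ n ih =>
    rw [Function.iterate_succ_apply', Function.iterate_succ_apply', ← ih,
      pderivE_comm i j (iter_contDiff j n hg)]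

theorem foldr_add {d : ℕ} (β : Fin d → ℕ) (i : Fin d) {g : EuclideanSpace ℝ (Fin d) → ℝ}
    (hg : ContDiff ℝ (⊤ : ℕ∞) g) (l : List (Fin d)) (hl : l.Nodup) :
    l.foldr (fun k g => (pderivE k)^[β k + if k = i then 1 else 0] g) g =
      if i ∈ l then pderivE i (l.foldr (fun i g => (pderivE i)^[β i] g) g)
      else l.foldr (fun i g => (pderivE i)^[β i] g) g := by
  induction l with
  | nil => simp
  | cons j l ih =>
    rw [List.nodup_cons] at hl
    rw [List.foldr_cons, List.foldr_cons, ih hl.2]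
    by_cases hij : j = i
    · subst hij
      simp [hl.1, Function.iterate_succ_apply', -Function.iterate_succ]
    · by_cases hil : i ∈ l
      · simp only [hij, hil, if_true, if_false, List.mem_cons, or_true, add_zero]
        rw [pderivE_iter_comm i j _ (foldr_contDiff β hg l)]
      · simp [hij, hil, Ne.symm hij]

theorem mderiv_add {d : ℕ} (β : Fin d → ℕ) (i : Fin d) {g : EuclideanSpace ℝ (Fin d) → ℝ}
    (hg : ContDiff ℝ (⊤ : ℕ∞) g) :
    mderiv (fun k => β k + if k = i then 1 else 0) g = pderivE i (mderiv β g) := by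
  unfold mderiv
  rw [foldr_add β i hg _ (List.nodup_finRange d)]
  simp


noncomputable def vsq {d : ℕ} (f : EuclideanSpace ℝ (Fin d) → ℝ) (β : Fin d → ℕ)
    (x : Fin d → ℝ) : ℝ≥0∞ := ‖mderiv β f (WithLp.toLp 2 x)‖ₑ ^ 2

theorem vsq_meas {d : ℕ} {f : EuclideanSpace ℝ (Fin d) → ℝ} (hf : ContDiff ℝ (⊤ : ℕ∞) f)
    (β : Fin d → ℕ) : Measurable (vsq f β) := by
  have h1 : Continuous (mderiv β f) := (foldr_contDiff β hf _).continuous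
  have h2 : Continuous fun x : Fin d → ℝ => mderiv β f (WithLp.toLp 2 x) := by fun_prop
  exact (h2.measurable.enorm).pow_const 2

theorem vsq_step {d : ℕ} {f : EuclideanSpace ℝ (Fin d) → ℝ} (hf : ContDiff ℝ (⊤ : ℕ∞) f)
    (β : Fin d → ℕ) (i : Fin d) (x : Fin d → ℝ) :
    vsq f β x ≤ 2 * ∫⁻ s, (vsq f β (Function.update x i s) +
      vsq f (fun k => β k + if k = i then 1 else 0) (Function.update x i s)) := by
  have hg : ContDiff ℝ (⊤ : ℕ∞) (mderiv β f) := foldr_contDiff β hf _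
  have hc : Continuous (pderivE i (mderiv β f)) := (pderivE_contDiff i hg).continuous
  have hu : Continuous fun s : ℝ => WithLp.toLp 2 (Function.update x i s) := by fun_prop
  have hder : ∀ s : ℝ, HasDerivAt (fun s : ℝ => (WithLp.toLp 2 (Function.update x i s) :
      EuclideanSpace ℝ (Fin d))) (EuclideanSpace.single i 1) s := by
    intro s
    have h1 := hasDerivAt_update x i s
    have := (PiLp.continuousLinearEquiv 2 ℝ (fun _ : Fin d => ℝ)).symm.toContinuousLinearMap.hasFDerivAt.comp_hasDerivAt s h1
    exact this
  have := aux1d (fun s => mderiv β f (WithLp.toLp 2 (Function.update x i s)))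
    (fun s => pderivE i (mderiv β f) (WithLp.toLp 2 (Function.update x i s)))
    (fun s => ((hg.differentiable (by simp)) _).hasFDerivAt.comp_hasDerivAt s (hder s))
    (hc.comp hu) (x i)
  simpa [vsq, mderiv_add β i hf] using this

theorem vsq_ind {d : ℕ} {f : EuclideanSpace ℝ (Fin d) → ℝ} (hf : ContDiff ℝ (⊤ : ℕ∞) f)
    (S : Finset (Fin d)) : ∀ (β : Fin d → ℕ) (x : Fin d → ℝ),
    vsq f β x ≤ 2 ^ S.card * ∑ T ∈ S.powerset,
      (∫⋯∫⁻_S, vsq f (fun k => β k + if k ∈ T then 1 else 0) ∂fun _ => volume) x := by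
  induction S using Finset.induction_on with
  | empty => intro β x; simp
  | insert i S hi ih =>
    intro β x
    have hm : ∀ γ : Fin d → ℕ, Measurable fun s : ℝ =>
        (∫⋯∫⁻_S, vsq f γ ∂fun _ => volume) (Function.update x i s) := fun γ =>
      ((vsq_meas hf γ).lmarginal _).comp (measurable_update x)
    refine (vsq_step hf β i x).trans ?_
    refine (mul_le_mul_right (lintegral_mono fun s =>
      add_le_add (ih β (Function.update x i s)) (ih _ (Function.update x i s))) 2).trans ?_
    rw [Finset.card_insert_of_notMem hi, Finset.sum_powerset_insert hi]
    simp_rw [lmarginal_insert _ (vsq_meas hf _) hi]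
    simp_rw [← mul_add]
    rw [lintegral_const_mul' _ _ (by simp), lintegral_add_left,
      lintegral_finsetSum, lintegral_finsetSum, ← mul_assoc, pow_succ' 2 S.card]
    · apply le_of_eq
      congr 2
      refine Finset.sum_congr rfl fun T hT => ?_
      have hiT : i ∉ T := fun h => hi (Finset.mem_powerset.1 hT h)
      have : (fun k => (β k + if k = i then 1 else 0) + if k ∈ T then 1 else 0) =
          (fun k => β k + if k ∈ insert i T then 1 else 0) := by
        ext k
        by_cases hk : k = i
        · subst hk; simp [hiT]
        · simp [hk]
      rw [this]
    · exact fun _ _ => hm _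
    · exact fun _ _ => hm _
    · exact Finset.measurable_sum _ fun _ _ => hm _

theorem pt_bound {d : ℕ} {f : EuclideanSpace ℝ (Fin d) → ℝ} (hf : ContDiff ℝ (⊤ : ℕ∞) f)
    (β : Fin d → ℕ) (M : ℝ) (hM : 0 ≤ M)
    (hb : ∀ T : Finset (Fin d), eLpNorm (mderiv (fun k => β k + if k ∈ T then 1 else 0) f) 2 volume
      ≤ ENNReal.ofReal M) (x : EuclideanSpace ℝ (Fin d)) : |mderiv β f x| ≤ 2 ^ d * M := by
  have h1 := vsq_ind hf Finset.univ β (WithLp.ofLp x)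
  have h2 : ∀ γ : Fin d → ℕ, ∫⁻ z, vsq f γ z ∂(Measure.pi fun _ => volume) =
      (eLpNorm (mderiv γ f) 2 volume) ^ 2 := by
    intro γ
    have hp := (PiLp.volume_preserving_toLp (Fin d)).lintegral_comp_emb
      (MeasurableEquiv.toLp 2 (Fin d → ℝ)).measurableEmbedding
      (fun z => ‖mderiv γ f z‖ₑ ^ 2)
    have he := eLpNorm_nnreal_pow_eq_lintegral (μ := (volume : Measure (EuclideanSpace ℝ (Fin d))))
      (f := mderiv γ f) (p := 2) (by norm_num)
    simp only [NNReal.coe_ofNat, ENNReal.coe_ofNat, ENNReal.rpow_ofNat] at he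
    rw [he, ← hp]
    rfl
  simp only [lmarginal_univ, h2] at h1
  have h3 : vsq f β (WithLp.ofLp x) ≤ ENNReal.ofReal ((2 ^ d * M) ^ 2) := by
    refine h1.trans ?_
    refine (mul_le_mul_right (Finset.sum_le_sum (g := fun _ => ENNReal.ofReal M ^ 2)
      fun T _ => pow_le_pow_left' (hb T) 2) _).trans (le_of_eq ?_)
    simp only [Finset.sum_const, Finset.card_powerset, Finset.card_univ, Fintype.card_fin]
    rw [mul_pow, ENNReal.ofReal_mul (by positivity), ENNReal.ofReal_pow hM, nsmul_eq_mul,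
      ENNReal.ofReal_pow (by positivity), ENNReal.ofReal_pow (by positivity)]
    simp; ring
  have h4 : vsq f β (WithLp.ofLp x) = ENNReal.ofReal (|mderiv β f x| ^ 2) := by
    rw [ENNReal.ofReal_pow (abs_nonneg _), ← Real.norm_eq_abs, ofReal_norm]; rfl
  rw [h4, ENNReal.ofReal_le_ofReal_iff (by positivity)] at h3
  exact le_of_sq_le_sq h3 (by positivity)

theorem summable_pi_prod (g : ℕ → ℝ) (hg0 : ∀ n, 0 ≤ g n) (hg : Summable g) (d : ℕ) :
    Summable (fun α : Fin d → ℕ => ∏ i, g (α i)) := by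
  induction d with
  | zero => exact (hasSum_fintype _).summable
  | succ n ih =>
    rw [← (Fin.consEquiv (fun _ : Fin (n+1) => ℕ)).summable_iff]
    have := hg.mul_of_nonneg ih hg0 (fun α => Finset.prod_nonneg fun i _ => hg0 _)
    refine this.congr fun p => ?_
    simp [Fin.prod_univ_succ, Fin.consEquiv]

theorem local_sup_bounds
    (d : ℕ) (hd : 1 ≤ d)
    (f : EuclideanSpace ℝ (Fin d) → ℝ) (hf : ContDiff ℝ (⊤ : ℕ∞) f)
    (C₁ C₂ : ℝ) (hC₁ : 0 < C₁) (hC₂ : 0 < C₂)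
    (hbound : ∀ β : Fin d → ℕ,
      eLpNorm (mderiv β f) 2 volume ≤
        ENNReal.ofReal (C₁ * C₂ ^ (∑ i, β i) * ((∏ i, (β i).factorial : ℕ) : ℝ)))
    (σ : ℝ) (hσ0 : 0 < σ) (hσ1 : σ ≤ 1) (hσC₂ : 2 * C₂ * σ < 1)
    (y : EuclideanSpace ℝ (Fin d)) (τ : ℝ) (hτ0 : 0 < τ) (hτ : τ < σ / d)
    (B : Set (EuclideanSpace ℝ (Fin d))) (hB : B = Metric.ball y τ) :
    ∃ C₀ : ℝ, 0 < C₀ ∧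
      (∀ α : Fin d → ℕ,
        (⨆ x : B, |mderiv α f x|) ≤
          C₀ * (((∑ i, α i) + d).factorial : ℝ) / σ ^ (∑ i, α i)) ∧
      Summable (fun α : Fin d → ℕ =>
        (⨆ x : B, |mderiv α f x|) / ((∏ i, (α i).factorial : ℕ) : ℝ) *
          τ ^ (∑ i, α i)) := by
  set K : ℝ := (max 1 C₂) ^ d with hK
  have hK0 : 0 < K := by positivity
  set C₀ : ℝ := 2 ^ d * (C₁ * K) with hC₀
  have hC₀0 : 0 < C₀ := by positivity
  have main : ∀ α : Fin d → ℕ, (⨆ x : B, |mderiv α f x|) ≤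
      C₀ * C₂ ^ (∑ i, α i) * ((∏ i, (α i + 1).factorial : ℕ) : ℝ) := by
    intro α
    refine Real.iSup_le (fun x => ?_) (by positivity)
    refine (pt_bound hf α (C₁ * K * C₂ ^ (∑ i, α i) * ((∏ i, (α i + 1).factorial : ℕ) : ℝ))
      (by positivity) (fun T => ?_) x).trans (le_of_eq (by rw [hC₀]; ring))
    refine (hbound _).trans (ENNReal.ofReal_le_ofReal ?_)
    have hcard : (∑ i, (α i + if i ∈ T then 1 else 0)) = (∑ i, α i) + T.card := by
      simp [Finset.sum_add_distrib]
    rw [hcard, pow_add]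
    have hT : C₂ ^ T.card ≤ K :=
      (pow_le_pow_left₀ hC₂.le (le_max_right 1 C₂) _).trans
        (pow_le_pow_right₀ (le_max_left _ _) (by simpa using T.card_le_univ))
    have hF : ((∏ i, (α i + if i ∈ T then 1 else 0).factorial : ℕ) : ℝ) ≤
        ((∏ i, (α i + 1).factorial : ℕ) : ℝ) := by
      exact_mod_cast Finset.prod_le_prod' fun i _ => Nat.factorial_le (by split_ifs <;> simp)
    calc C₁ * (C₂ ^ (∑ i, α i) * C₂ ^ T.card) *
          ((∏ i, (α i + if i ∈ T then 1 else 0).factorial : ℕ) : ℝ)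
        ≤ C₁ * (C₂ ^ (∑ i, α i) * K) * ((∏ i, (α i + 1).factorial : ℕ) : ℝ) := by gcongr
      _ = _ := by ring
  refine ⟨C₀, hC₀0, fun α => ?_, ?_⟩
  · refine (main α).trans ?_
    rw [mul_div_right_comm, div_eq_mul_inv, ← inv_pow]
    have h1 : C₂ ≤ σ⁻¹ := by
      rw [le_inv_comm₀ hC₂ hσ0, ← one_div, le_div_iff₀ hC₂]
      nlinarith [mul_pos hC₂ hσ0]
    have h2 : ((∏ i, (α i + 1).factorial : ℕ) : ℝ) ≤ (((∑ i, α i) + d).factorial : ℝ) := by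
      have := Nat.le_of_dvd (Nat.factorial_pos _)
        (Nat.prod_factorial_dvd_factorial_sum Finset.univ (fun i => α i + 1))
      simp only [Finset.sum_add_distrib, Finset.sum_const, Finset.card_univ, Fintype.card_fin,
        smul_eq_mul, mul_one] at this
      exact_mod_cast this
    gcongr
  · have hτσ : τ < σ := by
      refine hτ.trans_le (div_le_self hσ0.le (by exact_mod_cast hd))
    have hr0 : 0 ≤ C₂ * τ := by positivity
    have hr : C₂ * τ < 1 := by nlinarith
    have hg : Summable fun n : ℕ => ((n : ℝ) + 1) * (C₂ * τ) ^ n := by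
      have h1 := summable_pow_mul_geometric_of_norm_lt_one (R := ℝ) 1 (r := C₂ * τ)
        (by rwa [Real.norm_of_nonneg hr0])
      have h2 := summable_geometric_of_lt_one hr0 hr
      refine (h1.add h2).congr fun n => ?_
      simp; ring
    have hs := (summable_pi_prod _ (fun n => by positivity) hg d).mul_left C₀
    refine Summable.of_nonneg_of_le (fun α => ?_) (fun α => ?_) hs
    · have : 0 ≤ ⨆ x : B, |mderiv α f x| := Real.iSup_nonneg fun _ => abs_nonneg _
      positivity
    · have hpos : 0 < ((∏ i, (α i).factorial : ℕ) : ℝ) := by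
        exact_mod_cast Finset.prod_pos fun i _ => Nat.factorial_pos _
      calc _ ≤ C₀ * C₂ ^ (∑ i, α i) * ((∏ i, (α i + 1).factorial : ℕ) : ℝ) /
            ((∏ i, (α i).factorial : ℕ) : ℝ) * τ ^ (∑ i, α i) := by
            gcongr; exact main α
        _ = _ := by
          have e : ((∏ i, (α i + 1).factorial : ℕ) : ℝ) =
              (∏ i, ((α i : ℝ) + 1)) * ((∏ i, (α i).factorial : ℕ) : ℝ) := by
            push_cast [Nat.factorial_succ]
            rw [Finset.prod_mul_distrib]
          rw [e, Finset.prod_mul_distrib, Finset.prod_pow_eq_pow_sum, mul_pow]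
          field_simp
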